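/- arXiv:2205.08825 — 3 statements merged into one kernel-verified Lean document; each statement's English description precedes it below -/
import Mathlib

section
/- Let X = Σ_{i=1}^n Rᵢ ∂/∂xᵢ be a polynomial vector field of degree at most one defined on S_{p,q}, so that X h = K h for some polynomial K. Then K = 0; that is, 4(x₁² + ⋯ + x_{p+1}² − a²)·(Σ_{i=1}^{p+1} xᵢRᵢ) + 2·Σ_{j=p+2}^n xⱼRⱼ = 0 identically, and hence h is a first integral of X (X h = 0). -/
/-!
A vector field `D` of degree at most one does not raise total degrees, so comparing degrees in
`D h = K h` forces the cofactor `K` to be a constant. At a point where `h` does not vanish but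
`D h` does, such as a critical point of `h` off its zero set, this constant must be `0`. The
polynomial `h` of `S_{p,q}` has such a point: at `(a, 0, …, 0)` its value is `-1` and both
`x₁² + ⋯ + x_{p+1}² - a²` and the coordinates `x_{p+2}, …, x_n` vanish, hence so does the gradient.
-/

open MvPolynomial

/-- The first `p+1` coordinates of `Fin (p+q+1)`, corresponding to `x₁, …, x_{p+1}`. -/
def idx1 (p q : ℕ) (i : Fin (p+1)) : Fin (p+q+1) := Fin.castLE (by omega) i

/-- The last `q` coordinates of `Fin (p+q+1)`, corresponding to `x_{p+2}, …, x_n`. -/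
def idx2 (p q : ℕ) (j : Fin q) : Fin (p+q+1) := ⟨p+1+(j:ℕ), by omega⟩

/-- The polynomial `h = (x₁² + ⋯ + x_{p+1}² − a²)² + x_{p+2}² + ⋯ + x_n² − 1`
whose zero set is `S_{p,q}`. -/
noncomputable def hpq (p q : ℕ) (a : ℝ) : MvPolynomial (Fin (p+q+1)) ℝ :=
  ((∑ i : Fin (p+1), X (idx1 p q i) ^ 2) - C (a^2))^2
    + (∑ j : Fin q, X (idx2 p q j) ^ 2) - 1

section Derivation

theorem derivation_sum_apply {τ R A M : Type*} [CommSemiring R] [CommSemiring A] [Algebra R A]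
    [AddCommMonoid M] [Module A M] [Module R M] (s : Finset τ) (D : τ → Derivation R A M) (f : A) :
    (∑ i ∈ s, D i) f = ∑ i ∈ s, D i f :=
  (congrFun (map_sum Derivation.coeFnAddMonoidHom D s) f).trans (Finset.sum_apply f s _)

variable {σ k : Type*} [CommSemiring k]

theorem mkDerivation_apply_eq_sum_mul_pderiv [Fintype σ]
    (R : σ → MvPolynomial σ k) (f : MvPolynomial σ k) :
    mkDerivation k R f = ∑ i, R i * pderiv i f := by
  classical
  have hsum : mkDerivation k R = ∑ i, R i • pderiv i := by
    ext1 j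
    simp [derivation_sum_apply, pderiv_X, Pi.single_apply]
  simp [hsum, derivation_sum_apply]

theorem totalDegree_derivation_monomial_le
    {D : Derivation k (MvPolynomial σ k) (MvPolynomial σ k)} {d : ℕ}
    (hD : ∀ i, (D (X i)).totalDegree ≤ d + 1) (s : σ →₀ ℕ) (c : k) :
    (D (monomial s c)).totalDegree ≤ s.degree + d := by
  have hD_eq : D = mkDerivation k fun i => D (X i) := by
    ext1 i
    rw [mkDerivation_X]
  rw [hD_eq, mkDerivation_monomial]
  refine (totalDegree_smul_le _ _).trans (totalDegree_finsetSum_le fun i hi => ?_)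
  have hs : (s - Finsupp.single i 1).degree + 1 = s.degree := by
    have hle : Finsupp.single i 1 ≤ s := by
      rw [Finsupp.single_le_iff, Nat.one_le_iff_ne_zero]
      exact Finsupp.mem_support_iff.mp hi
    conv_rhs => rw [← tsub_add_cancel_of_le hle, map_add, Finsupp.degree_single]
  calc (monomial (s - Finsupp.single i 1) (s i : k) • D (X i)).totalDegree
      ≤ (monomial (s - Finsupp.single i 1) (s i : k)).totalDegree + (D (X i)).totalDegree :=
        totalDegree_mul _ _
    _ ≤ (s - Finsupp.single i 1).degree + (d + 1) :=
        add_le_add (totalDegree_monomial_le _ _) (hD i)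
    _ = s.degree + d := by omega

theorem totalDegree_derivation_le
    {D : Derivation k (MvPolynomial σ k) (MvPolynomial σ k)} {d : ℕ}
    (hD : ∀ i, (D (X i)).totalDegree ≤ d + 1) (f : MvPolynomial σ k) :
    (D f).totalDegree ≤ f.totalDegree + d := by
  conv_lhs => rw [f.as_sum, map_sum]
  exact totalDegree_finsetSum_le fun s hs =>
    (totalDegree_derivation_monomial_le hD s _).trans (Nat.add_le_add_right (le_totalDegree hs) d)

theorem totalDegree_le_of_derivation_eq_mul [NoZeroDivisors k]
    {D : Derivation k (MvPolynomial σ k) (MvPolynomial σ k)} {d : ℕ}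
    (hD : ∀ i, (D (X i)).totalDegree ≤ d + 1) {h K : MvPolynomial σ k} (hh : h ≠ 0)
    (hK : D h = K * h) : K.totalDegree ≤ d := by
  obtain rfl | hK₀ := eq_or_ne K 0
  · exact totalDegree_zero.trans_le (Nat.zero_le d)
  · have hle : (K * h).totalDegree ≤ h.totalDegree + d := hK ▸ totalDegree_derivation_le hD h
    rw [totalDegree_mul_of_isDomain hK₀ hh] at hle
    omega

theorem eq_zero_of_derivation_eq_mul_of_eval_eq_zero [NoZeroDivisors k]
    {D : Derivation k (MvPolynomial σ k) (MvPolynomial σ k)}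
    (hD : ∀ i, (D (X i)).totalDegree ≤ 1) {h K : MvPolynomial σ k} (hK : D h = K * h)
    {x : σ → k} (hDx : eval x (D h) = 0) (hx : eval x h ≠ 0) : K = 0 := by
  have hh : h ≠ 0 := by
    rintro rfl
    exact hx (map_zero _)
  have hK_const : K = C (K.coeff 0) :=
    totalDegree_eq_zero_iff_eq_C.mp (Nat.le_zero.mp (totalDegree_le_of_derivation_eq_mul hD hh hK))
  rw [hK, hK_const, map_mul, eval_C, mul_eq_zero_iff_right hx] at hDx
  rw [hK_const, hDx, C_0]

end Derivation

section SphereProduct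

variable {ι κ σ k : Type*} [Fintype ι]

theorem exists_sum_sq_eq_and_forall_eq_zero [CommSemiring k] [Nonempty ι] {u : ι → σ} {v : κ → σ}
    (hu : Function.Injective u) (huv : ∀ i j, u i ≠ v j) (a : k) :
    ∃ x : σ → k, ∑ i, x (u i) ^ 2 = a ^ 2 ∧ ∀ j, x (v j) = 0 := by
  classical
  obtain ⟨i₀⟩ := ‹Nonempty ι›
  refine ⟨Pi.single (u i₀) a, ?_, fun j => Pi.single_eq_of_ne (huv i₀ j).symm _⟩
  simp [Pi.single_apply, hu.eq_iff, ite_pow]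

variable [Fintype κ] [CommRing k]

/-- The equation `(∑ xᵢ² - a²)² + ∑ yⱼ² - 1` of a product of spheres, whose two blocks of
coordinates are selected by `u` and `v`; `S_{p,q}` is the case of `idx1 p q` and `idx2 p q`. -/
noncomputable def sphereProductPoly (u : ι → σ) (v : κ → σ) (a : k) : MvPolynomial σ k :=
  ((∑ i, X (u i) ^ 2) - C (a ^ 2)) ^ 2 + (∑ j, X (v j) ^ 2) - 1

theorem hpq_eq_sphereProductPoly (p q : ℕ) (a : ℝ) :
    hpq p q a = sphereProductPoly (idx1 p q) (idx2 p q) a :=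
  rfl

theorem derivation_sphereProductPoly (D : Derivation k (MvPolynomial σ k) (MvPolynomial σ k))
    (u : ι → σ) (v : κ → σ) (a : k) :
    D (sphereProductPoly u v a) =
      4 * ((∑ i, X (u i) ^ 2) - C (a ^ 2)) * (∑ i, X (u i) * D (X (u i)))
        + 2 * (∑ j, X (v j) * D (X (v j))) := by
  have hsq (i : σ) : D (X i ^ 2) = 2 * (X i * D (X i)) := by
    simp [Derivation.leibniz_pow]
  simp only [sphereProductPoly, map_sub, map_add, map_sum, Derivation.leibniz_pow D (_ - _),
    derivation_C, Derivation.map_one_eq_zero, hsq, ← Finset.mul_sum, smul_eq_mul, nsmul_eq_mul]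
  push_cast
  ring

variable {u : ι → σ} {v : κ → σ} {a : k} {x : σ → k}

theorem eval_sphereProductPoly (hu : ∑ i, x (u i) ^ 2 = a ^ 2) (hv : ∀ j, x (v j) = 0) :
    eval x (sphereProductPoly u v a) = -1 := by
  simp [sphereProductPoly, hu, hv]

theorem eval_derivation_sphereProductPoly
    (D : Derivation k (MvPolynomial σ k) (MvPolynomial σ k))
    (hu : ∑ i, x (u i) ^ 2 = a ^ 2) (hv : ∀ j, x (v j) = 0) :
    eval x (D (sphereProductPoly u v a)) = 0 := by
  simp [derivation_sphereProductPoly, hu, hv]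

theorem stmt2_general [IsDomain k] [Nonempty ι] (hu : Function.Injective u)
    (huv : ∀ i j, u i ≠ v j) (D : Derivation k (MvPolynomial σ k) (MvPolynomial σ k))
    (hD : ∀ i, (D (X i)).totalDegree ≤ 1) (K : MvPolynomial σ k)
    (hK : D (sphereProductPoly u v a) = K * sphereProductPoly u v a) :
    K = 0 ∧
    4 * ((∑ i, X (u i) ^ 2) - C (a ^ 2)) * (∑ i, X (u i) * D (X (u i)))
      + 2 * (∑ j, X (v j) * D (X (v j))) = 0 ∧
    D (sphereProductPoly u v a) = 0 := by
  obtain ⟨x, hxu, hxv⟩ := exists_sum_sq_eq_and_forall_eq_zero hu huv a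
  have hx : eval x (sphereProductPoly u v a) ≠ 0 := by simp [eval_sphereProductPoly hxu hxv]
  have hK₀ : K = 0 := eq_zero_of_derivation_eq_mul_of_eval_eq_zero hD hK
    (eval_derivation_sphereProductPoly D hxu hxv) hx
  have hDh : D (sphereProductPoly u v a) = 0 := by rw [hK, hK₀, zero_mul]
  exact ⟨hK₀, derivation_sphereProductPoly D u v a ▸ hDh, hDh⟩

end SphereProduct

theorem idx1_injective (p q : ℕ) : Function.Injective (idx1 p q) :=
  Fin.castLE_injective (by omega)

theorem idx1_ne_idx2 (p q : ℕ) (i : Fin (p + 1)) (j : Fin q) : idx1 p q i ≠ idx2 p q j := by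
  simp only [idx1, idx2, ne_eq, Fin.ext_iff, Fin.val_castLE]
  omega

/-- For a polynomial vector field `X = Σ Rᵢ ∂/∂xᵢ` of degree at most one defined on
`S_{p,q}` (i.e. `X h = K h`), the cofactor `K` vanishes; that is,
`4(x₁²+⋯+x_{p+1}²−a²)·(Σ_{i≤p+1} xᵢRᵢ) + 2·Σ_{j≥p+2} xⱼRⱼ = 0` identically,
and hence `h` is a first integral of `X` (`X h = 0`). -/
theorem stmt2 (p q : ℕ) (hp : 1 ≤ p) (hq : 1 ≤ q) (a : ℝ) (ha : 1 < a)
    (R : Fin (p+q+1) → MvPolynomial (Fin (p+q+1)) ℝ)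
    (hdeg : ∀ i, (R i).totalDegree ≤ 1)
    (K : MvPolynomial (Fin (p+q+1)) ℝ)
    (hinv : (∑ i, R i * pderiv i (hpq p q a)) = K * hpq p q a) :
    K = 0 ∧
    4 * ((∑ i : Fin (p+1), X (idx1 p q i) ^ 2) - C (a^2))
        * (∑ i : Fin (p+1), X (idx1 p q i) * R (idx1 p q i))
      + 2 * (∑ j : Fin q, X (idx2 p q j) * R (idx2 p q j)) = 0 ∧
    (∑ i, R i * pderiv i (hpq p q a)) = 0 := by
  rw [hpq_eq_sphereProductPoly, ← mkDerivation_apply_eq_sum_mul_pderiv] at hinv ⊢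
  simpa only [mkDerivation_X] using stmt2_general (idx1_injective p q) (idx1_ne_idx2 p q)
    (mkDerivation ℝ R) (by simpa only [mkDerivation_X] using hdeg) K hinv
end

section
/- Let q ≥ 1 be an integer, n = q + 2, a > 1, and let (a₁,a₂) ∈ ℝ² be nonzero. Then the intersection {x ∈ ℝⁿ : a₁x₁ + a₂x₂ = 0} ∩ S_{1,q} has exactly two connected components. -/
/-- The hypersurface `S_{1,q} ⊂ ℝ^{q+2}` defined by
`(x₁² + x₂² − a²)² + x₃² + ⋯ + x_n² = 1`, which is homeomorphic to `S¹ × S^q`. -/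
def S1q (q : ℕ) (a : ℝ) : Set (Fin (q+2) → ℝ) :=
  {x | (x 0 ^ 2 + x 1 ^ 2 - a^2)^2
        + (∑ j : Fin q, x (⟨2+(j:ℕ), by omega⟩ : Fin (q+2)) ^ 2) = 1}

/-!
For `c > 1` the equation `(‖p‖² - c)² + ‖w‖² = 1` forces `p ≠ 0`, so `(p, w)` is determined by the
direction `p / ‖p‖` and by the point `(‖p‖² - c, w)` of a unit sphere; conversely both can be
prescribed freely. The hyperplane `a₁x₁ + a₂x₂ = 0` cuts `S_{1,q}` in such a hypersurface with
`p ∈ ℝ` and `c = a²`, hence in a copy of `{±1} × S^q`, and `S^q` is connected for `q ≥ 1`.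
-/

open Metric NormedSpace Topology

section ConnectedComponents

variable {X D Y : Type*} [TopologicalSpace X] [TopologicalSpace D] [TopologicalSpace Y]

theorem bijective_connectedComponents_mk [TotallyDisconnectedSpace D] :
    Function.Bijective (ConnectedComponents.mk : D → ConnectedComponents D) :=
  ⟨fun x y h => by simpa using ConnectedComponents.coe_eq_coe'.1 h,
    ConnectedComponents.surjective_coe⟩

theorem card_connectedComponents_of_homeomorph_prod [TotallyDisconnectedSpace D] [ConnectedSpace Y]
    (e : X ≃ₜ D × Y) : Nat.card (ConnectedComponents X) = Nat.card D := by
  have hquot : IsQuotientMap (Prod.fst ∘ e) := isQuotientMap_fst.comp e.isQuotientMap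
  have hfiber (d : D) : IsConnected (Prod.fst ∘ e ⁻¹' {d}) := by
    rw [Set.preimage_comp, e.isConnected_preimage, ← Set.prod_univ]
    exact isConnected_singleton.prod isConnected_univ
  rw [Nat.card_eq_of_bijective _ (hquot.isCoinducing.connectedComponentsMap_bijective hfiber),
    ← Nat.card_eq_of_bijective _ bijective_connectedComponents_mk]

end ConnectedComponents

section Spheres

instance finite_sphere_real (x r : ℝ) : Finite (sphere x r) := by
  rcases lt_or_ge r 0 with hr | hr
  · rw [sphere_eq_empty_of_neg hr]
    infer_instance
  · rw [Real.sphere_eq_pair x hr]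
    infer_instance

theorem card_sphere_real (x : ℝ) {r : ℝ} (hr : 0 < r) : Nat.card (sphere x r) = 2 := by
  rw [Real.sphere_eq_pair x hr.le, Nat.card_coe_set_eq, Set.ncard_pair (by linarith)]

theorem norm_sqrt_smul_sq {E : Type*} [NormedAddCommGroup E] [NormedSpace ℝ E] {u : E}
    (hu : u ∈ sphere (0 : E) 1) {r : ℝ} (hr : 0 ≤ r) :
    ‖√r • u‖ ^ 2 = r := by
  rw [norm_smul, mem_sphere_zero_iff_norm.1 hu, mul_one, Real.norm_eq_abs, sq_abs, Real.sq_sqrt hr]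

variable (F : Type*) [NormedAddCommGroup F] [NormedSpace ℝ F] [Nontrivial F]

theorem one_lt_rank_withLp_prod : 1 < Module.rank ℝ (WithLp 2 (ℝ × F)) := by
  rw [(WithLp.linearEquiv 2 ℝ (ℝ × F)).rank_eq, rank_prod, Module.rank_self, Cardinal.lift_one]
  have h : 1 ≤ Cardinal.lift (Module.rank ℝ F) := Cardinal.one_le_iff_pos.2 (by simp [rank_pos])
  calc (1 : Cardinal) < 1 + 1 := by norm_num
    _ ≤ _ := by gcongr

theorem connectedSpace_sphere_withLp_prod :
    ConnectedSpace (sphere (0 : WithLp 2 (ℝ × F)) 1) :=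
  isConnected_iff_connectedSpace.1 <|
    isConnected_sphere (one_lt_rank_withLp_prod F) 0 zero_le_one

end Spheres

section ToralHypersurface

variable (E F : Type*) [NormedAddCommGroup E] [NormedAddCommGroup F]

/-- The hypersurface `(‖p‖² - c)² + ‖w‖² = 1` of `E × F`; for `E = ℝ²`, `F = ℝ^q` and `c = a²` it
is `S_{1,q}`. -/
def toralHypersurface (c : ℝ) : Set (E × F) :=
  {p | (‖p.1‖ ^ 2 - c) ^ 2 + ‖p.2‖ ^ 2 = 1}

variable {E F} {c : ℝ}

theorem fst_ne_zero_of_mem_toralHypersurface (hc : 1 < c) {p : E × F}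
    (hp : p ∈ toralHypersurface E F c) : p.1 ≠ 0 := by
  intro h0
  have h : c ^ 2 + ‖p.2‖ ^ 2 = 1 := by simpa [toralHypersurface, h0] using hp
  nlinarith [sq_nonneg ‖p.2‖]

theorem toLp_mem_sphere_of_mem_toralHypersurface {p : E × F} (hp : p ∈ toralHypersurface E F c) :
    WithLp.toLp 2 (‖p.1‖ ^ 2 - c, p.2) ∈ sphere (0 : WithLp 2 (ℝ × F)) 1 := by
  rw [mem_sphere_zero_iff_norm, ← sq_eq_sq₀ (norm_nonneg _) zero_le_one,
    WithLp.prod_norm_sq_eq_of_L2]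
  simpa [toralHypersurface] using hp

theorem add_fst_pos_of_mem_sphere (hc : 1 < c) {y : WithLp 2 (ℝ × F)}
    (hy : y ∈ sphere (0 : WithLp 2 (ℝ × F)) 1) : 0 < c + y.fst := by
  have h : |y.fst| ≤ 1 := (WithLp.norm_fst_le _ y).trans_eq (mem_sphere_zero_iff_norm.1 hy)
  linarith [(abs_le.1 h).1]

variable [NormedSpace ℝ E]

theorem sqrt_smul_mem_toralHypersurface (hc : 1 < c) {u : E} (hu : u ∈ sphere (0 : E) 1)
    {y : WithLp 2 (ℝ × F)} (hy : y ∈ sphere (0 : WithLp 2 (ℝ × F)) 1) :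
    (√(c + y.fst) • u, y.snd) ∈ toralHypersurface E F c := by
  have h := WithLp.prod_norm_sq_eq_of_L2 y
  rw [mem_sphere_zero_iff_norm.1 hy, one_pow, Real.norm_eq_abs, sq_abs] at h
  have hpos := add_fst_pos_of_mem_sphere hc hy
  rw [toralHypersurface, Set.mem_ofPred_eq, norm_sqrt_smul_sq hu hpos.le, add_sub_cancel_left, ← h]

/-- The polar decomposition `(p, w) ↦ (p / ‖p‖, (‖p‖² - c, w))` of the toral hypersurface,
with inverse `(u, (s, w)) ↦ (√(c + s) u, w)`. Since `ℝ × F` itself carries the sup norm, its unit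
sphere has to be taken in `WithLp 2 (ℝ × F)`. -/
noncomputable def toralHypersurfaceHomeomorph (hc : 1 < c) :
    toralHypersurface E F c ≃ₜ sphere (0 : E) 1 × sphere (0 : WithLp 2 (ℝ × F)) 1 where
  toFun p :=
    (⟨normalize p.1.1, mem_sphere_zero_iff_norm.2 <|
      norm_normalize (fst_ne_zero_of_mem_toralHypersurface hc p.2)⟩,
      ⟨WithLp.toLp 2 (‖p.1.1‖ ^ 2 - c, p.1.2), toLp_mem_sphere_of_mem_toralHypersurface p.2⟩)
  invFun y := ⟨_, sqrt_smul_mem_toralHypersurface hc y.1.2 y.2.2⟩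
  left_inv p := by
    ext1
    simp [Real.sqrt_sq]
  right_inv y := by
    have hpos := add_fst_pos_of_mem_sphere hc y.2.2
    ext1 <;> ext1
    · simp [normalize_smul_of_pos (Real.sqrt_pos.2 hpos), normalize_eq_self_of_norm_eq_one]
    · exact congrArg (WithLp.toLp 2) (Prod.ext (by simp [norm_sqrt_smul_sq y.1.2 hpos.le]) rfl)
  continuous_toFun := by
    have hne (p : toralHypersurface E F c) : ‖p.1.1‖ ≠ 0 :=
      norm_ne_zero_iff.2 (fst_ne_zero_of_mem_toralHypersurface hc p.2)
    unfold NormedSpace.normalize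
    fun_prop (disch := exact hne _)
  continuous_invFun := by fun_prop

end ToralHypersurface

section HyperplaneSection

variable {q : ℕ}

theorem mem_S1q_iff {a : ℝ} {x : Fin (q + 2) → ℝ} :
    x ∈ S1q q a ↔ (x 0 ^ 2 + x 1 ^ 2 - a ^ 2) ^ 2 + ∑ j : Fin q, x j.succ.succ ^ 2 = 1 := by
  have h (j : Fin q) : (⟨2 + j, by omega⟩ : Fin (q + 2)) = j.succ.succ :=
    Fin.ext (Nat.add_comm 2 j)
  simp only [S1q, Set.mem_ofPred_eq, h]

/-- The parametrization `(t, w) ↦ (-t sin θ, t cos θ, w)` of the hyperplane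
`x₁ cos θ + x₂ sin θ = 0`, which pulls `S_{1,q}` back to a toral hypersurface in `ℝ × ℝ^q`. -/
noncomputable def hyperplaneEmbedding (θ : ℝ) (p : ℝ × EuclideanSpace ℝ (Fin q)) :
    Fin (q + 2) → ℝ :=
  Matrix.vecCons (-p.1 * Real.sin θ) (Matrix.vecCons (p.1 * Real.cos θ) p.2)

/-- The coordinates `(x₂ cos θ - x₁ sin θ, (x₃, …, x_n))` recovering a point from its image under
`hyperplaneEmbedding θ`. -/
noncomputable def hyperplaneCoordinates (θ : ℝ) (x : Fin (q + 2) → ℝ) :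
    ℝ × EuclideanSpace ℝ (Fin q) :=
  (x 1 * Real.cos θ - x 0 * Real.sin θ, WithLp.toLp 2 fun j => x j.succ.succ)

theorem hyperplaneCoordinates_hyperplaneEmbedding (θ : ℝ) :
    Function.LeftInverse (hyperplaneCoordinates (q := q) θ) (hyperplaneEmbedding θ) := by
  intro p
  ext1
  · simp only [hyperplaneCoordinates, hyperplaneEmbedding, Matrix.cons_val_one,
      Matrix.cons_val_zero]
    linear_combination p.1 * Real.sin_sq_add_cos_sq θ
  · ext j
    simp [hyperplaneCoordinates, hyperplaneEmbedding]

theorem hyperplaneEmbedding_hyperplaneCoordinates {θ : ℝ} {x : Fin (q + 2) → ℝ}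
    (hx : Real.cos θ * x 0 + Real.sin θ * x 1 = 0) :
    hyperplaneEmbedding θ (hyperplaneCoordinates θ x) = x := by
  have hθ := Real.sin_sq_add_cos_sq θ
  funext i
  refine Fin.cases ?_ (Fin.cases ?_ fun j => ?_) i
  · simp only [hyperplaneCoordinates, hyperplaneEmbedding, Matrix.cons_val_zero]
    linear_combination x 0 * hθ - Real.cos θ * hx
  · simp only [hyperplaneCoordinates, hyperplaneEmbedding, Fin.succ_zero_eq_one,
      Matrix.cons_val_one, Matrix.cons_val_zero]
    linear_combination x 1 * hθ - Real.sin θ * hx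
  · simp [hyperplaneCoordinates, hyperplaneEmbedding]

theorem isEmbedding_hyperplaneEmbedding (θ : ℝ) : IsEmbedding (hyperplaneEmbedding (q := q) θ) := by
  refine (hyperplaneCoordinates_hyperplaneEmbedding θ).isEmbedding ?_ ?_
  · unfold hyperplaneCoordinates
    fun_prop
  · unfold hyperplaneEmbedding
    fun_prop

theorem hyperplaneEmbedding_mem_S1q_iff {θ a : ℝ} {p : ℝ × EuclideanSpace ℝ (Fin q)} :
    hyperplaneEmbedding θ p ∈ S1q q a ↔
      p ∈ toralHypersurface ℝ (EuclideanSpace ℝ (Fin q)) (a ^ 2) := by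
  have h : (-p.1 * Real.sin θ) ^ 2 + (p.1 * Real.cos θ) ^ 2 = p.1 ^ 2 := by
    linear_combination p.1 ^ 2 * Real.sin_sq_add_cos_sq θ
  rw [mem_S1q_iff]
  simp [toralHypersurface, hyperplaneEmbedding, EuclideanSpace.real_norm_sq_eq, ← h]

theorem hyperplaneEmbedding_image_toralHypersurface (θ a : ℝ) :
    hyperplaneEmbedding θ '' toralHypersurface ℝ (EuclideanSpace ℝ (Fin q)) (a ^ 2) =
      {x | Real.cos θ * x 0 + Real.sin θ * x 1 = 0} ∩ S1q q a := by
  ext x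
  constructor
  · rintro ⟨p, hp, rfl⟩
    refine ⟨?_, hyperplaneEmbedding_mem_S1q_iff.2 hp⟩
    simp only [hyperplaneEmbedding, Set.mem_ofPred_eq, Matrix.cons_val_zero, Matrix.cons_val_one]
    ring
  · rintro ⟨hline, hS⟩
    have hx := hyperplaneEmbedding_hyperplaneCoordinates hline
    exact ⟨hyperplaneCoordinates θ x, hyperplaneEmbedding_mem_S1q_iff.1 (by rwa [hx]), hx⟩

theorem exists_angle_forall_eq_zero_iff {a₁ a₂ : ℝ} (h : (a₁, a₂) ≠ (0, 0)) :
    ∃ θ : ℝ, ∀ x y : ℝ, a₁ * x + a₂ * y = 0 ↔ Real.cos θ * x + Real.sin θ * y = 0 := by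
  set z : ℂ := ⟨a₁, a₂⟩ with hz
  have hnorm : ‖z‖ ≠ 0 := by
    simpa [hz, Complex.ext_iff] using h
  refine ⟨z.arg, fun x y => ?_⟩
  have hre : ‖z‖ * Real.cos z.arg = a₁ := Complex.norm_mul_cos_arg z
  have him : ‖z‖ * Real.sin z.arg = a₂ := Complex.norm_mul_sin_arg z
  rw [← hre, ← him, mul_assoc, mul_assoc, ← mul_add, mul_eq_zero_iff_left hnorm]

theorem nonempty_hyperplane_inter_S1q_homeomorph {a a₁ a₂ : ℝ} (ha : 1 < a ^ 2)
    (h : (a₁, a₂) ≠ (0, 0)) :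
    Nonempty (({x | a₁ * x 0 + a₂ * x 1 = 0} ∩ S1q q a : Set (Fin (q + 2) → ℝ)) ≃ₜ
      sphere (0 : ℝ) 1 × sphere (0 : WithLp 2 (ℝ × EuclideanSpace ℝ (Fin q))) 1) := by
  obtain ⟨θ, hθ⟩ := exists_angle_forall_eq_zero_iff h
  have himage : {x | a₁ * x 0 + a₂ * x 1 = 0} ∩ S1q q a = hyperplaneEmbedding θ ''
      toralHypersurface ℝ (EuclideanSpace ℝ (Fin q)) (a ^ 2) := by
    simp_rw [hyperplaneEmbedding_image_toralHypersurface, hθ]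
  rw [himage]
  exact ⟨((isEmbedding_hyperplaneEmbedding θ).homeomorphImage _).symm.trans
    (toralHypersurfaceHomeomorph ha)⟩

end HyperplaneSection

/-- For a nonzero `(a₁,a₂) ∈ ℝ²`, the intersection
`{a₁x₁ + a₂x₂ = 0} ∩ S_{1,q}` has exactly two connected components. -/
theorem stmt13 (q : ℕ) (hq : 1 ≤ q) (a : ℝ) (ha : 1 < a)
    (a1 a2 : ℝ) (hA : (a1, a2) ≠ (0, 0)) :
    Nat.card (ConnectedComponents
      ↥({x : Fin (q+2) → ℝ | a1 * x 0 + a2 * x 1 = 0} ∩ S1q q a)) = 2 := by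
  have : NeZero q := ⟨Nat.one_le_iff_ne_zero.1 hq⟩
  have := connectedSpace_sphere_withLp_prod (EuclideanSpace ℝ (Fin q))
  obtain ⟨e⟩ := nonempty_hyperplane_inter_S1q_homeomorph (q := q) (one_lt_pow₀ ha two_ne_zero) hA
  rw [card_connectedComponents_of_homeomorph_prod e, card_sphere_real 0 one_pos]
end

section
/- Let q ≥ 2 be an integer, n = q + 2, a > 1, let (b₃,…,b_n) ∈ ℝ^q satisfy b₃² + ⋯ + b_n² = 1, and let c ∈ (0,1). Then the intersection {x ∈ ℝⁿ : b₃x₃ + ⋯ + b_nx_n = c} ∩ S_{1,q} is nonempty and has exactly one connected component (it is connected). -/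
/-
Writing `x = (z, v)` with `z ∈ ℝ²` and `v = c • b + w`, `w ⟂ b`, turns the section into
`(‖z‖² - a²)² + ‖w‖² = 1 - c²`. For each unit vector `u ⟂ b`, the points with `w ∈ ℝ≥0 • u` form
a graph over the planar region `|‖z‖² - a²| ≤ √(1 - c²)`, a disc or an annulus, so this sheet is
connected. All the sheets contain the circle `w = 0`, `‖z‖² = a² + √(1 - c²)`, so their union is
connected too.
-/

open Metric
open scoped RealInnerProductSpace

/-- The hypersurface `(‖z‖² - m)² + ‖w‖² = R²` in `V × W`. With `V = ℝ²`, `W = ℝ^q`, `m = a²` and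
`R = 1` it is `S_{1,q}`; general `W` and `R` are needed to describe its hyperplane sections. -/
def normSqHypersurface (V W : Type*) [NormedAddCommGroup V] [NormedAddCommGroup W] (m R : ℝ) :
    Set (V × W) :=
  {p | (‖p.1‖ ^ 2 - m) ^ 2 + ‖p.2‖ ^ 2 = R ^ 2}

lemma mem_normSqHypersurface {V W : Type*} [NormedAddCommGroup V] [NormedAddCommGroup W]
    {m R : ℝ} {p : V × W} :
    p ∈ normSqHypersurface V W m R ↔ (‖p.1‖ ^ 2 - m) ^ 2 + ‖p.2‖ ^ 2 = R ^ 2 :=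
  Iff.rfl

section NormedSpace

variable {V W : Type*} [NormedAddCommGroup V] [NormedSpace ℝ V]
  [NormedAddCommGroup W] [NormedSpace ℝ W]

lemma exists_norm_eq_one_and_norm_smul_eq [Nontrivial W] (w : W) :
    ∃ u : W, ‖u‖ = 1 ∧ ‖w‖ • u = w := by
  rcases eq_or_ne w 0 with rfl | hw
  · obtain ⟨u, hu⟩ := exists_norm_eq W zero_le_one
    exact ⟨u, hu, by simp⟩
  · exact ⟨‖w‖⁻¹ • w, norm_smul_inv_norm hw, smul_inv_smul₀ (norm_ne_zero_iff.2 hw) w⟩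

lemma isPreconnected_preimage_norm (hV : 1 < Module.rank ℝ V) {s : Set ℝ} (hs : s.OrdConnected) :
    IsPreconnected ((‖·‖) ⁻¹' s : Set V) := by
  have : Nontrivial V := rank_pos_iff_nontrivial.1 (zero_lt_one.trans hV)
  have hpolar : ((‖·‖) ⁻¹' s : Set V) =
      (fun p : ℝ × V ↦ p.1 • p.2) '' ((s ∩ Set.Ici 0) ×ˢ sphere 0 1) := by
    ext z
    constructor
    · intro hz
      obtain ⟨u, hu, hzu⟩ := exists_norm_eq_one_and_norm_smul_eq z
      exact ⟨(‖z‖, u), ⟨⟨hz, norm_nonneg z⟩, mem_sphere_zero_iff_norm.2 hu⟩, hzu⟩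
    · rintro ⟨⟨r, u⟩, ⟨⟨hr : r ∈ s, hr₀ : 0 ≤ r⟩, hu⟩, rfl⟩
      simpa [norm_smul, mem_sphere_zero_iff_norm.1 hu, abs_of_nonneg hr₀] using hr
  rw [hpolar]
  exact ((hs.inter Set.ordConnected_Ici).isPreconnected.prod
    (isPreconnected_sphere hV 0 1)).image _ (by fun_prop)

lemma isPreconnected_setOf_abs_norm_sq_sub_le (hV : 1 < Module.rank ℝ V) {m R : ℝ}
    (hmR : 0 ≤ m + R) : IsPreconnected {z : V | |‖z‖ ^ 2 - m| ≤ R} := by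
  have hannulus : {z : V | |‖z‖ ^ 2 - m| ≤ R} = (‖·‖) ⁻¹' Set.Icc √(m - R) √(m + R) := by
    ext z
    rw [Set.mem_ofPred_eq, Set.mem_preimage, Set.mem_Icc, Real.sqrt_le_left (norm_nonneg z),
      Real.le_sqrt (norm_nonneg z) hmR, abs_sub_le_iff, sub_le_iff_le_add', sub_le_comm, and_comm]
  rw [hannulus]
  exact isPreconnected_preimage_norm hV Set.ordConnected_Icc

lemma isConnected_normSqHypersurface [Nontrivial W] (hV : 1 < Module.rank ℝ V) {m R : ℝ}
    (hR : 0 ≤ R) (hmR : 0 ≤ m + R) : IsConnected (normSqHypersurface V W m R) := by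
  have : Nontrivial V := rank_pos_iff_nontrivial.1 (zero_lt_one.trans hV)
  obtain ⟨z₀, hz₀⟩ := exists_norm_eq V (Real.sqrt_nonneg (m + R))
  have hz₀_sq : ‖z₀‖ ^ 2 - m = R := by rw [hz₀, Real.sq_sqrt hmR, add_sub_cancel_left]
  refine ⟨⟨(z₀, 0), by simp [mem_normSqHypersurface, hz₀_sq]⟩, isPreconnected_of_forall (z₀, 0) ?_⟩
  rintro ⟨z, w⟩ (hzw : (‖z‖ ^ 2 - m) ^ 2 + ‖w‖ ^ 2 = R ^ 2)
  obtain ⟨u, hu, hwu⟩ := exists_norm_eq_one_and_norm_smul_eq w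
  let sheet (y : V) : V × W := (y, √(R ^ 2 - (‖y‖ ^ 2 - m) ^ 2) • u)
  refine ⟨sheet '' {y | |‖y‖ ^ 2 - m| ≤ R}, ?_, ⟨z₀, ?_, ?_⟩, ⟨z, ?_, ?_⟩, ?_⟩
  · rintro _ ⟨y, hy : |‖y‖ ^ 2 - m| ≤ R, rfl⟩
    have hy_sq : 0 ≤ R ^ 2 - (‖y‖ ^ 2 - m) ^ 2 :=
      sub_nonneg.2 (sq_le_sq.2 (hy.trans (le_abs_self R)))
    simp [sheet, mem_normSqHypersurface, norm_smul, hu, Real.sq_sqrt hy_sq]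
  · simp [hz₀_sq, abs_of_nonneg hR]
  · simp [sheet, hz₀_sq]
  · exact abs_le_of_sq_le_sq (by nlinarith [sq_nonneg ‖w‖]) hR
  · have hw_sq : R ^ 2 - (‖z‖ ^ 2 - m) ^ 2 = ‖w‖ ^ 2 := by rw [← hzw, add_sub_cancel_left]
    simp only [sheet, hw_sq, Real.sqrt_sq (norm_nonneg w), hwu]
  · exact (isPreconnected_setOf_abs_norm_sq_sub_le hV hmR).image _ (by fun_prop)

end NormedSpace

section InnerProductSpace

variable {V E : Type*} [NormedAddCommGroup V] [NormedAddCommGroup E] [InnerProductSpace ℝ E]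

lemma nontrivial_orthogonal_span_singleton (hE : 1 < Module.rank ℝ E) (b : E) :
    Nontrivial (ℝ ∙ b)ᗮ := by
  rw [Submodule.nontrivial_iff_ne_bot, Ne, Submodule.orthogonal_eq_bot_iff]
  intro htop
  refine hE.not_ge ?_
  calc Module.rank ℝ E = Module.rank ℝ (ℝ ∙ b) := by rw [htop, rank_top]
    _ ≤ 1 := by simpa using rank_span_le (R := ℝ) {b}

lemma norm_smul_add_sq {b w : E} (hb : ‖b‖ = 1) (hw : ⟪b, w⟫ = 0) (c : ℝ) :
    ‖c • b + w‖ ^ 2 = c ^ 2 + ‖w‖ ^ 2 := by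
  simp [norm_add_sq_real, norm_smul, hb, real_inner_smul_left, hw]

lemma setOf_inner_eq_inter_normSqHypersurface {b : E} (hb : ‖b‖ = 1) {c R : ℝ} (hcR : |c| ≤ R)
    (m : ℝ) :
    {p : V × E | ⟪b, p.2⟫ = c} ∩ normSqHypersurface V E m R =
      (fun p : V × (ℝ ∙ b)ᗮ ↦ (p.1, c • b + p.2)) ''
        normSqHypersurface V (ℝ ∙ b)ᗮ m √(R ^ 2 - c ^ 2) := by
  have hcR_sq : 0 ≤ R ^ 2 - c ^ 2 := sub_nonneg.2 (sq_le_sq.2 (hcR.trans (le_abs_self R)))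
  have hbb : ⟪b, b⟫ = 1 := by rw [real_inner_self_eq_norm_sq, hb, one_pow]
  ext ⟨z, v⟩
  constructor
  · rintro ⟨hv : ⟪b, v⟫ = c, hzv : (‖z‖ ^ 2 - m) ^ 2 + ‖v‖ ^ 2 = R ^ 2⟩
    have horth : ⟪b, v - c • b⟫ = 0 := by
      rw [inner_sub_right, real_inner_smul_right, hv, hbb, mul_one, sub_self]
    have hnorm : ‖v‖ ^ 2 = c ^ 2 + ‖v - c • b‖ ^ 2 := by
      rw [← norm_smul_add_sq hb horth, add_sub_cancel]
    refine ⟨(z, ⟨v - c • b, Submodule.mem_orthogonal_singleton_iff_inner_right.2 horth⟩), ?_,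
      by simp⟩
    rw [mem_normSqHypersurface, Real.sq_sqrt hcR_sq, Submodule.coe_norm]
    linarith
  · rintro ⟨⟨z, w⟩, hzw : (‖z‖ ^ 2 - m) ^ 2 + ‖(w : E)‖ ^ 2 = _, ⟨⟩⟩
    rw [Real.sq_sqrt hcR_sq] at hzw
    have horth : ⟪b, (w : E)⟫ = 0 := Submodule.mem_orthogonal_singleton_iff_inner_right.1 w.2
    refine ⟨?_, ?_⟩
    · rw [Set.mem_ofPred_eq, inner_add_right, real_inner_smul_right, hbb, horth, mul_one, add_zero]
    · rw [mem_normSqHypersurface, norm_smul_add_sq hb horth]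
      linarith

lemma isConnected_setOf_inner_eq_inter_normSqHypersurface [NormedSpace ℝ V]
    (hV : 1 < Module.rank ℝ V) (hE : 1 < Module.rank ℝ E) {b : E} (hb : ‖b‖ = 1) {m c R : ℝ}
    (hm : 0 ≤ m + √(R ^ 2 - c ^ 2)) (hcR : |c| ≤ R) :
    IsConnected ({p : V × E | ⟪b, p.2⟫ = c} ∩ normSqHypersurface V E m R) := by
  have := nontrivial_orthogonal_span_singleton hE b
  rw [setOf_inner_eq_inter_normSqHypersurface hb hcR]
  exact (isConnected_normSqHypersurface hV (Real.sqrt_nonneg _) hm).image _ (by fun_prop)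

end InnerProductSpace

section Coordinates

lemma one_lt_rank_euclideanSpace_fin {n : ℕ} (hn : 1 < n) :
    1 < Module.rank ℝ (EuclideanSpace ℝ (Fin n)) := by
  rw [← Module.finrank_eq_rank, finrank_euclideanSpace_fin]
  exact_mod_cast hn

variable {q : ℕ}

/-- The identification of `ℝ² × ℝ^q`, with its Euclidean norms, with the coordinate space
`ℝ^{q+2}` containing `S_{1,q}`. -/
def planeProdCoords (p : EuclideanSpace ℝ (Fin 2) × EuclideanSpace ℝ (Fin q)) : Fin (q + 2) → ℝ :=
  Matrix.vecCons (p.1 0) (Matrix.vecCons (p.1 1) p.2)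

lemma continuous_planeProdCoords : Continuous (planeProdCoords (q := q)) := by
  unfold planeProdCoords
  fun_prop

lemma surjective_planeProdCoords : Function.Surjective (planeProdCoords (q := q)) := fun x ↦
  ⟨(!₂[x 0, x 1], WithLp.toLp 2 (Matrix.vecTail (Matrix.vecTail x))),
    (congrArg _ (Matrix.cons_head_tail _)).trans (Matrix.cons_head_tail x)⟩

lemma planeProdCoords_two_add (p : EuclideanSpace ℝ (Fin 2) × EuclideanSpace ℝ (Fin q))
    (j : Fin q) (hj : 2 + (j : ℕ) < q + 2) : planeProdCoords p ⟨2 + j, hj⟩ = p.2 j := by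
  have hj_succ : (⟨2 + j, hj⟩ : Fin (q + 2)) = j.succ.succ := Fin.ext (add_comm _ _)
  rw [hj_succ]
  rfl

lemma planeProdCoords_preimage_setOf_sum_mul_eq (b : Fin q → ℝ) (c : ℝ) :
    planeProdCoords ⁻¹' {x : Fin (q + 2) → ℝ |
      ∑ j : Fin q, b j * x (⟨2 + (j : ℕ), by omega⟩ : Fin (q + 2)) = c} =
      {p | ⟪WithLp.toLp 2 b, p.2⟫ = c} := by
  ext p
  simp [planeProdCoords_two_add, PiLp.inner_apply, mul_comm]

lemma planeProdCoords_preimage_S1q (q : ℕ) (a : ℝ) :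
    planeProdCoords ⁻¹' S1q q a = normSqHypersurface _ _ (a ^ 2) 1 := by
  ext p
  have h₀ : planeProdCoords p 0 = p.1 0 := rfl
  have h₁ : planeProdCoords p 1 = p.1 1 := rfl
  simp [S1q, mem_normSqHypersurface, planeProdCoords_two_add, h₀, h₁,
    EuclideanSpace.real_norm_sq_eq]

end Coordinates

theorem stmt14_general (q : ℕ) (hq : 2 ≤ q) (a : ℝ) (b : Fin q → ℝ)
    (hb : ∑ j : Fin q, b j ^ 2 = 1) (c : ℝ) (hc : c ∈ Set.Icc (-1 : ℝ) 1) :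
    IsConnected ({x : Fin (q+2) → ℝ |
      ∑ j : Fin q, b j * x (⟨2+(j:ℕ), by omega⟩ : Fin (q+2)) = c} ∩ S1q q a) := by
  have hb_norm : ‖WithLp.toLp 2 b‖ = 1 := by
    rw [← sq_eq_sq₀ (norm_nonneg _) zero_le_one, EuclideanSpace.real_norm_sq_eq, one_pow, hb]
  rw [← Set.image_preimage_eq (_ ∩ _) surjective_planeProdCoords, Set.preimage_inter,
    planeProdCoords_preimage_setOf_sum_mul_eq, planeProdCoords_preimage_S1q]
  exact (isConnected_setOf_inner_eq_inter_normSqHypersurface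
    (one_lt_rank_euclideanSpace_fin one_lt_two) (one_lt_rank_euclideanSpace_fin hq)
    hb_norm (by positivity) (abs_le.2 hc)).image _ continuous_planeProdCoords.continuousOn

/-- For `q ≥ 2`, a unit vector `(b₃,…,b_n) ∈ ℝ^q` and `c ∈ (0,1)`, the intersection
`{b₃x₃ + ⋯ + b_nx_n = c} ∩ S_{1,q}` is nonempty and connected (it has exactly one
connected component). -/
theorem stmt14 (q : ℕ) (hq : 2 ≤ q) (a : ℝ) (ha : 1 < a)
    (b : Fin q → ℝ) (hb : ∑ j : Fin q, b j ^ 2 = 1) (c : ℝ) (hc : c ∈ Set.Ioo (0:ℝ) 1) :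
    IsConnected ({x : Fin (q+2) → ℝ |
      ∑ j : Fin q, b j * x (⟨2+(j:ℕ), by omega⟩ : Fin (q+2)) = c} ∩ S1q q a) :=
  stmt14_general q hq a b hb c ⟨by linarith [hc.1], hc.2.le⟩
end
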